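/- Let 𝔤 = 𝔤₁ ⊕ ⋯ ⊕ 𝔤_r be a finite-dimensional real Lie algebra that is the direct sum of ideals 𝔤₁, …, 𝔤_r, each of which is a simple Lie algebra with negative-definite Killing form, and let 𝔥 ⊆ 𝔤 be a Lie subalgebra. Suppose that for some s ≤ r one has 𝔥 ⊆ 𝔤₁ ⊕ ⋯ ⊕ 𝔤_s and 𝔥 ∩ 𝔤ᵢ ≠ 0 for all i = 1, …, s. Then dim N(𝔤,𝔥) = r − s, and the restriction map Ψ, sending an invariant symmetric bilinear form B on 𝔤 to its restriction B|_{𝔥×𝔥}, has rank s. -/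

import Mathlib

/-- The space `N(𝔤,𝔥)` of invariant symmetric bilinear forms on a real Lie algebra `L`
vanishing identically on a subspace `p`. -/
noncomputable def NForms (L : Type*) [LieRing L] [LieAlgebra ℝ L] (p : Submodule ℝ L) :
    Submodule ℝ (L →ₗ[ℝ] L →ₗ[ℝ] ℝ) where
  carrier := {B | (∀ x y z : L, B ⁅x, y⁆ z = B x ⁅y, z⁆) ∧ (∀ x y : L, B x y = B y x) ∧
    ∀ x ∈ p, ∀ y ∈ p, B x y = 0}
  add_mem' := by
    rintro B C ⟨hB1, hB2, hB3⟩ ⟨hC1, hC2, hC3⟩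
    exact ⟨fun x y z => by simp [hB1 x y z, hC1 x y z],
      fun x y => by simp [hB2 x y, hC2 x y],
      fun x hx y hy => by simp [hB3 x hx y hy, hC3 x hx y hy]⟩
  zero_mem' := ⟨fun _ _ _ => by simp, fun _ _ => by simp, fun _ _ _ _ => by simp⟩
  smul_mem' := by
    rintro c B ⟨h1, h2, h3⟩
    exact ⟨fun x y z => by simp [h1 x y z], fun x y => by simp [h2 x y],
      fun x hx y hy => by simp [h3 x hx y hy]⟩

/-- The space of invariant symmetric bilinear forms on a real Lie algebra `L`. -/
noncomputable def invSymmForms (L : Type*) [LieRing L] [LieAlgebra ℝ L] :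
    Submodule ℝ (L →ₗ[ℝ] L →ₗ[ℝ] ℝ) where
  carrier := {B | (∀ x y z : L, B ⁅x, y⁆ z = B x ⁅y, z⁆) ∧ ∀ x y : L, B x y = B y x}
  add_mem' := by
    rintro B C ⟨hB1, hB2⟩ ⟨hC1, hC2⟩
    exact ⟨fun x y z => by simp [hB1 x y z, hC1 x y z],
      fun x y => by simp [hB2 x y, hC2 x y]⟩
  zero_mem' := ⟨fun _ _ _ => by simp, fun _ _ => by simp⟩
  smul_mem' := by
    rintro c B ⟨h1, h2⟩
    exact ⟨fun x y z => by simp [h1 x y z], fun x y => by simp [h2 x y]⟩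

/-- The restriction map `Ψ`, sending a bilinear form on `L` to its restriction to the
subspace `p`, as a linear map. -/
noncomputable def restrictBilin (L : Type*) [LieRing L] [LieAlgebra ℝ L]
    (p : Submodule ℝ L) :
    (L →ₗ[ℝ] L →ₗ[ℝ] ℝ) →ₗ[ℝ] (↥p →ₗ[ℝ] ↥p →ₗ[ℝ] ℝ) where
  toFun B := LinearMap.domRestrict₁₂ B p p
  map_add' B C := by
    ext x y
    simp [LinearMap.domRestrict₁₂, LinearMap.domRestrict, LinearMap.domRestrict₂]
  map_smul' c B := by
    ext x y
    simp [LinearMap.domRestrict₁₂, LinearMap.domRestrict, LinearMap.domRestrict₂]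


theorem aux_eig {V : Type*} [AddCommGroup V] [Module ℝ V] [FiniteDimensional ℝ V]
    [Nontrivial V] (P B : V →ₗ[ℝ] V →ₗ[ℝ] ℝ) (hPs : ∀ x y, P x y = P y x)
    (hBs : ∀ x y, B x y = B y x) (hP : ∀ x, x ≠ 0 → 0 < P x x) :
    ∃ (c : ℝ) (v : V), v ≠ 0 ∧ ∀ y, B v y = c * P v y := by
  have hinj : Function.Injective P := by
    rw [← LinearMap.ker_eq_bot, LinearMap.ker_eq_bot']
    intro x hx
    by_contra hne
    have := hP x hne
    rw [hx] at this
    simp at this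
  let e : V ≃ₗ[ℝ] Module.Dual ℝ V :=
    LinearMap.linearEquivOfInjective P hinj (Subspace.dual_finrank_eq).symm
  have he : ∀ x y, e x y = P x y := fun x y => rfl
  let T : V →ₗ[ℝ] V := e.symm.toLinearMap ∘ₗ B
  have hT : ∀ x y, P (T x) y = B x y := by
    intro x y
    rw [← he]
    simp [T]
  let core : InnerProductSpace.Core ℝ V :=
    { inner := fun x y => P x y
      conj_inner_symm := fun x y => by simp [hPs y x]
      re_inner_nonneg := fun x => by
        by_cases hx : x = 0
        · simp [hx]
        · simpa using (hP x hx).le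
      add_left := fun x y z => by simp
      smul_left := fun x y r => by simp
      definite := fun x hx => by
        by_contra hne
        exact (hP x hne).ne' hx }
  let _ng : NormedAddCommGroup V := core.toNormedAddCommGroup
  let _ip : InnerProductSpace ℝ V := InnerProductSpace.ofCore core.toCore
  have hin : ∀ x y : V, inner ℝ x y = P x y := fun x y => rfl
  have hsym : T.IsSymmetric := by
    intro x y
    rw [hin, hin, hT, hPs, hT, hBs]
  obtain ⟨c, hc⟩ : ∃ c : ℝ, Module.End.HasEigenvalue T c :=
    ⟨_, hsym.hasEigenvalue_iSup_of_finiteDimensional⟩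
  obtain ⟨v, hv⟩ := hc.exists_hasEigenvector
  refine ⟨c, v, hv.2, fun y => ?_⟩
  rw [← hT, hv.apply_eq_smul, map_smul]
  rfl

theorem aux_simple_le {L : Type*} [LieRing L] [LieAlgebra ℝ L] (I : LieIdeal ℝ L)
    (hI : LieAlgebra.IsSimple ℝ ↥I) (p : Submodule ℝ L)
    (hp : ∀ x ∈ I, ∀ y ∈ I, y ∈ p → ⁅x, y⁆ ∈ p) (v : L) (hvI : v ∈ I) (hvp : v ∈ p)
    (hv : v ≠ 0) : ∀ x ∈ I, x ∈ p := by
  let J : LieIdeal ℝ ↥I :=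
    { (p.comap (LieSubmodule.toSubmodule I).subtype) with
      lie_mem := by
        intro x m hm
        exact hp x x.2 m m.2 hm }
  have hJ : ∀ x : ↥I, x ∈ J ↔ (x : L) ∈ p := fun x => Iff.rfl
  rcases hI.eq_bot_or_eq_top J with h | h
  · exfalso
    have h1 : (⟨v, hvI⟩ : ↥I) ∈ J := (hJ _).2 hvp
    rw [h, LieSubmodule.mem_bot] at h1
    exact hv (congrArg Subtype.val h1)
  · intro x hx
    have h1 : (⟨x, hx⟩ : ↥I) ∈ J := by rw [h]; exact LieSubmodule.mem_top _
    exact (hJ _).1 h1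

theorem aux_nonab {L : Type*} [LieRing L] [LieAlgebra ℝ L] (I : LieIdeal ℝ L)
    (hI : LieAlgebra.IsSimple ℝ ↥I) : ∃ x ∈ I, ∃ y ∈ I, ⁅x, y⁆ ≠ 0 := by
  by_contra! hcon
  apply hI.non_abelian
  constructor
  intro x y
  exact Subtype.ext (hcon x x.2 y y.2)

/-- orthogonality of commuting ideals -/
theorem aux_cross {L : Type*} [LieRing L] [LieAlgebra ℝ L] (I J : LieIdeal ℝ L)
    (hI : LieAlgebra.IsSimple ℝ ↥I) (hIJ : ∀ x ∈ I, ∀ y ∈ J, ⁅x, y⁆ = 0)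
    (B : L →ₗ[ℝ] L →ₗ[ℝ] ℝ) (hB : ∀ x y z : L, B ⁅x, y⁆ z = B x ⁅y, z⁆) :
    ∀ x ∈ I, ∀ z ∈ J, B x z = 0 := by
  let p : Submodule ℝ L :=
    { carrier := {x | ∀ z ∈ J, B x z = 0}
      add_mem' := fun {a b} ha hb z hz => by simp [ha z hz, hb z hz]
      zero_mem' := fun z _ => by simp
      smul_mem' := fun c x hx z hz => by simp [hx z hz] }
  have hbr : ∀ x ∈ I, ∀ y ∈ I, ⁅x, y⁆ ∈ p := by
    intro x _ y hy z hz
    rw [hB, hIJ y hy z hz, map_zero]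
  obtain ⟨x, hx, y, hy, hxy⟩ := aux_nonab I hI
  exact aux_simple_le I hI p (fun x hx y hy _ => hbr x hx y hy) ⁅x, y⁆
    (lie_mem_right ℝ L I x y hy) (hbr x hx y hy) hxy

/-- an invariant form is a multiple of the Killing form on a compact simple ideal -/
theorem aux_scalar {L : Type*} [LieRing L] [LieAlgebra ℝ L] [FiniteDimensional ℝ L]
    (I : LieIdeal ℝ L)
    (hI : LieAlgebra.IsSimple ℝ ↥I) (hneg : ∀ x ∈ I, x ≠ 0 → killingForm ℝ L x x < 0)
    (B : L →ₗ[ℝ] L →ₗ[ℝ] ℝ) (hB : ∀ x y z : L, B ⁅x, y⁆ z = B x ⁅y, z⁆)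
    (hBs : ∀ x y, B x y = B y x) :
    ∃ c : ℝ, ∀ x ∈ I, ∀ z ∈ I, B x z = c * killingForm ℝ L x z := by
  have hK : ∀ x y z : L, killingForm ℝ L ⁅x, y⁆ z = killingForm ℝ L x ⁅y, z⁆ :=
    fun x y z => LieModule.traceForm_apply_lie_apply ℝ L L x y z
  have hKs : ∀ x y : L, killingForm ℝ L x y = killingForm ℝ L y x :=
    fun x y => LieModule.traceForm_comm ℝ L L x y
  let W : Submodule ℝ L := LieSubmodule.toSubmodule I
  obtain ⟨a, ha, b, hb, hab⟩ := aux_nonab I hI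
  have hnt : Nontrivial W :=
    ⟨⟨⟨⁅a, b⁆, lie_mem_right ℝ L I a b hb⟩, 0, fun h => hab (congrArg Subtype.val h)⟩⟩
  obtain ⟨c, v, hv0, hv⟩ := aux_eig (V := W) (LinearMap.domRestrict₁₂ (-(killingForm ℝ L)) W W)
    (LinearMap.domRestrict₁₂ B W W)
    (fun x y => congrArg Neg.neg (hKs (x : L) y)) (fun x y => hBs (x : L) y)
    (fun x hx => by
      have := hneg x x.2 (fun h => hx (Subtype.ext h))
      exact neg_pos.2 this)
  have hv' : ∀ y ∈ I, B v y = (-c) * killingForm ℝ L v y := by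
    intro y hy
    have h1 : B v y = c * (-(killingForm ℝ L v y)) := hv ⟨y, hy⟩
    rw [h1]; ring
  let p : Submodule ℝ L :=
    { carrier := {x | ∀ z ∈ I, B x z = (-c) * killingForm ℝ L x z}
      add_mem' := fun {a b} ha hb z hz => by
        simp only [map_add, LinearMap.add_apply, ha z hz, hb z hz]; ring
      zero_mem' := fun z _ => by simp
      smul_mem' := fun c x hx z hz => by
        simp only [map_smul, LinearMap.smul_apply, hx z hz, smul_eq_mul]; ring }
  refine ⟨-c, aux_simple_le I hI p ?_ v v.2 hv' (fun h => hv0 (Subtype.ext h))⟩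
  intro x hx y hy hyp z hz
  have h1 := hyp ⁅x, z⁆ (lie_mem_right ℝ L I x z hz)
  rw [← lie_skew, map_neg, map_neg, LinearMap.neg_apply, LinearMap.neg_apply, hB, hK, h1]
  ring

theorem aux_comm {L : Type*} [LieRing L] [LieAlgebra ℝ L] (I J : LieIdeal ℝ L)
    (hd : Disjoint (LieSubmodule.toSubmodule I : Submodule ℝ L) (LieSubmodule.toSubmodule J)) :
    ∀ x ∈ I, ∀ y ∈ J, ⁅x, y⁆ = 0 := by
  intro x hx y hy
  exact Submodule.disjoint_def.1 hd _ (lie_mem_left ℝ L I x y hx) (lie_mem_right ℝ L J x y hy)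

/-- pull-back of the Killing form under the projection to an ideal -/
theorem aux_form {L : Type*} [LieRing L] [LieAlgebra ℝ L] (I J : LieIdeal ℝ L)
    (hc : IsCompl (LieSubmodule.toSubmodule I : Submodule ℝ L) (LieSubmodule.toSubmodule J)) :
    ∃ F : L →ₗ[ℝ] L →ₗ[ℝ] ℝ, F ∈ invSymmForms L ∧
      (∀ x ∈ I, ∀ y ∈ I, F x y = killingForm ℝ L x y) ∧ ∀ x ∈ J, F x = 0 := by
  have hK : ∀ x y z : L, killingForm ℝ L ⁅x, y⁆ z = killingForm ℝ L x ⁅y, z⁆ :=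
    fun x y z => LieModule.traceForm_apply_lie_apply ℝ L L x y z
  have hKs : ∀ x y : L, killingForm ℝ L x y = killingForm ℝ L y x :=
    fun x y => LieModule.traceForm_comm ℝ L L x y
  let π := Submodule.projection _ _ hc
  have hπI : ∀ x ∈ I, π x = x := fun x hx => Submodule.projection_apply_left hc ⟨x, hx⟩
  have hπJ : ∀ x ∈ J, π x = 0 := fun x hx => Submodule.projection_apply_right hc ⟨x, hx⟩
  have hmem : ∀ x, π x ∈ I := fun x => Submodule.projection_apply_mem hc x
  have hsubm : ∀ x, x - π x ∈ J := fun x => Submodule.sub_projection_mem hc x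
  have hcomm := aux_comm I J hc.disjoint
  have hbr : ∀ x y, π ⁅x, y⁆ = ⁅π x, π y⁆ := by
    intro x y
    have e1 : ⁅x, y⁆ = ⁅π x, π y⁆ + ⁅x - π x, y⁆ := by
      have : ⁅π x, y⁆ = ⁅π x, π y⁆ := by
        have := hcomm (π x) (hmem x) (y - π y) (hsubm y)
        rw [lie_sub] at this
        exact sub_eq_zero.1 this
      rw [sub_lie, this]; abel
    rw [e1, map_add, hπI _ (lie_mem_right ℝ L I _ _ (hmem y)),
      hπJ _ (lie_mem_left ℝ L J _ _ (hsubm x)), add_zero]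
  refine ⟨(killingForm ℝ L).compl₁₂ π π, ⟨?_, ?_⟩, ?_, ?_⟩
  · intro x y z
    simp only [LinearMap.compl₁₂_apply, hbr, hK]
  · intro x y
    simp only [LinearMap.compl₁₂_apply]
    exact hKs _ _
  · intro x hx y hy
    simp only [LinearMap.compl₁₂_apply, hπI x hx, hπI y hy]
  · intro x hx
    ext y
    simp only [LinearMap.compl₁₂_apply, hπJ x hx]
    simp

set_option maxSynthPendingDepth 5 in
theorem aux_dim {L : Type*} [LieRing L] [LieAlgebra ℝ L] [FiniteDimensional ℝ L]
    (r : ℕ) (g : Fin r → LieIdeal ℝ L)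
    (hsimple : ∀ i, LieAlgebra.IsSimple ℝ ↥(g i))
    (hneg : ∀ i, ∀ x ∈ g i, x ≠ 0 → killingForm ℝ L x x < 0)
    (hsup : (⨆ i, (LieSubmodule.toSubmodule (g i) : Submodule ℝ L)) = ⊤)
    (hindep : iSupIndep (fun i => (LieSubmodule.toSubmodule (g i) : Submodule ℝ L)))
    (h : Submodule ℝ L) (s : ℕ)
    (hsub : h ≤
      ⨆ i : {i : Fin r // (i : ℕ) < s}, (LieSubmodule.toSubmodule (g i.1) : Submodule ℝ L))
    (hcap : ∀ i : Fin r, (i : ℕ) < s →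
      h ⊓ (LieSubmodule.toSubmodule (g i) : Submodule ℝ L) ≠ ⊥) :
    Module.finrank ℝ ↥(NForms L h) = Fintype.card {i : Fin r // ¬ (i : ℕ) < s} := by
  have hv : ∀ i, ∃ v ∈ g i, v ≠ 0 ∧ ((i : ℕ) < s → v ∈ h) := by
    intro i
    by_cases hi : (i : ℕ) < s
    · obtain ⟨v, hv, hv0⟩ := Submodule.exists_mem_ne_zero_of_ne_bot (hcap i hi)
      exact ⟨v, hv.2, hv0, fun _ => hv.1⟩
    · obtain ⟨x, hx, y, hy, hxy⟩ := aux_nonab (g i) (hsimple i)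
      exact ⟨⁅x, y⁆, lie_mem_right ℝ L _ x y hy, hxy, fun h => absurd h hi⟩
  choose v hvg hv0 hvh using hv
  have hF : ∀ i, ∃ F : L →ₗ[ℝ] L →ₗ[ℝ] ℝ, F ∈ invSymmForms L ∧
      (∀ x ∈ g i, ∀ y ∈ g i, F x y = killingForm ℝ L x y) ∧ ∀ j, j ≠ i → ∀ x ∈ g j, F x = 0 := by
    intro i
    have hq : (LieSubmodule.toSubmodule (⨆ j : Fin r, ⨆ (_ : j ≠ i), g j) : Submodule ℝ L) =
        ⨆ j : Fin r, ⨆ (_ : j ≠ i), LieSubmodule.toSubmodule (g j) := by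
      simp only [LieSubmodule.iSup_toSubmodule]
    have hc : IsCompl (LieSubmodule.toSubmodule (g i) : Submodule ℝ L)
        (LieSubmodule.toSubmodule (⨆ j : Fin r, ⨆ (_ : j ≠ i), g j)) := by
      rw [hq]
      refine ⟨hindep i, codisjoint_iff_le_sup.2 ?_⟩
      rw [← hsup]
      refine iSup_le fun j => ?_
      by_cases hj : j = i
      · subst hj; exact le_sup_left
      · exact le_sup_of_le_right
          (le_iSup₂ (f := fun (j : Fin r) (_ : j ≠ i) => (g j).toSubmodule) j hj)
    obtain ⟨F, h1, h2, h3⟩ := aux_form _ _ hc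
    refine ⟨F, h1, h2, fun j hj x hx => h3 x ?_⟩
    exact (le_iSup₂ (f := fun (j : Fin r) (_ : j ≠ i) => g j) j hj) hx
  choose F hFinv hFK hF0 using hF
  have hcomm : ∀ i j, i ≠ j → ∀ x ∈ g i, ∀ y ∈ g j, ⁅x, y⁆ = 0 :=
    fun i j hij => aux_comm _ _ (hindep.pairwiseDisjoint hij)
  have hFN : ∀ i : Fin r, ¬ (i : ℕ) < s → F i ∈ NForms L h := by
    intro i hi
    refine ⟨(hFinv i).1, (hFinv i).2, fun x hx y _ => ?_⟩
    have hle : h ≤ LinearMap.ker (F i) := by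
      refine hsub.trans (iSup_le fun j => ?_)
      intro x hx
      exact hF0 i j.1 (fun hji => hi (hji ▸ j.2)) x hx
    rw [LinearMap.mem_ker.1 (hle hx), LinearMap.zero_apply]
  let E : ↥(NForms L h) →ₗ[ℝ] ({i : Fin r // ¬ (i : ℕ) < s} → ℝ) :=
    { toFun := fun B i => B.1 (v i.1) (v i.1)
      map_add' := fun B C => by ext i; simp
      map_smul' := fun c B => by ext i; simp }
  have hE : ∀ B i, E B i = B.1 (v i.1) (v i.1) := fun B i => rfl
  have hinj : Function.Injective E := by
    refine (injective_iff_map_eq_zero E).2 ?_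
    rintro ⟨B, hB1, hB2, hB3⟩ hB
    have hvv : ∀ i, B (v i) (v i) = 0 := by
      intro i
      by_cases hi : (i : ℕ) < s
      · exact hB3 _ (hvh i hi) _ (hvh i hi)
      · exact congrFun hB ⟨i, hi⟩
    have hij : ∀ i j, ∀ x ∈ g i, ∀ y ∈ g j, B x y = 0 := by
      intro i j
      by_cases hij : i = j
      · subst hij
        obtain ⟨c, hc⟩ := aux_scalar (g i) (hsimple i) (hneg i) B hB1 hB2
        have h1 := hc _ (hvg i) _ (hvg i)
        rw [hvv i] at h1
        have hc0 : c = 0 := by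
          rcases mul_eq_zero.1 h1.symm with h2 | h2
          · exact h2
          · exact absurd h2 (hneg i _ (hvg i) (hv0 i)).ne
        intro x hx y hy
        rw [hc x hx y hy, hc0, zero_mul]
      · exact aux_cross _ _ (hsimple i) (hcomm i j hij) B hB1
    have hker : (⊤ : Submodule ℝ L) ≤ LinearMap.ker B := by
      rw [← hsup]
      refine iSup_le fun i x hx => ?_
      have h2 : (⊤ : Submodule ℝ L) ≤ LinearMap.ker (B x) := by
        rw [← hsup]
        exact iSup_le fun j y hy => hij i j x hx y hy
      exact LinearMap.ext fun y => h2 (Submodule.mem_top (x := y))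
    exact Subtype.ext (LinearMap.ext fun x => hker (Submodule.mem_top (x := x)))
  have hsurj : Function.Surjective E := by
    intro c
    refine ⟨∑ i : {i : Fin r // ¬ (i : ℕ) < s},
      (c i / killingForm ℝ L (v i.1) (v i.1)) • (⟨F i.1, hFN i.1 i.2⟩ : ↥(NForms L h)), ?_⟩
    ext j
    rw [map_sum, Finset.sum_apply, Finset.sum_eq_single j]
    · rw [map_smul, Pi.smul_apply, hE, smul_eq_mul]
      show _ * F j.1 (v j.1) (v j.1) = _
      rw [hFK _ _ (hvg _) _ (hvg _)]
      exact div_mul_cancel₀ _ (hneg _ _ (hvg _) (hv0 _)).ne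
    · intro i _ hi
      rw [map_smul, Pi.smul_apply, hE, smul_eq_mul]
      show _ * F i.1 (v j.1) (v j.1) = _
      rw [hF0 i.1 j.1 (fun hh => hi (Subtype.ext hh.symm)) _ (hvg _)]
      simp
    · intro hj; exact absurd (Finset.mem_univ _) hj
  rw [(LinearEquiv.ofBijective E ⟨hinj, hsurj⟩).finrank_eq, Module.finrank_fintype_fun_eq_card]

set_option maxSynthPendingDepth 5 in
theorem aux_rank (L : Type*) [LieRing L] [LieAlgebra ℝ L] [FiniteDimensional ℝ L]
    (p : Submodule ℝ L) :
    Module.finrank ℝ ↥(Submodule.map (restrictBilin L p) (invSymmForms L)) +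
      Module.finrank ℝ
        ↥(LinearMap.ker ((restrictBilin L p).domRestrict (invSymmForms L))) =
      Module.finrank ℝ ↥(invSymmForms L) := by
  rw [← LinearMap.range_domRestrict]
  exact LinearMap.finrank_range_add_finrank_ker _

theorem aux_card (r s : ℕ) (hs : s ≤ r) :
    Fintype.card {i : Fin r // ¬ (i : ℕ) < s} = r - s := by
  rw [Fintype.card_subtype_compl, Fintype.card_fin, Fintype.card_subtype,
    Fin.card_filter_val_lt, min_eq_right hs]

/-- Let `𝔤 = 𝔤₁ ⊕ ⋯ ⊕ 𝔤ᵣ` be a direct sum of ideals, each a simple Lie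
algebra with negative-definite Killing form, and let `𝔥 ⊆ 𝔤` be a Lie subalgebra with
`𝔥 ⊆ 𝔤₁ ⊕ ⋯ ⊕ 𝔤ₛ` and `𝔥 ∩ 𝔤ᵢ ≠ 0` for `i = 1, …, s`.  Then `dim N(𝔤,𝔥) = r − s`, and
the restriction map `Ψ`, sending an invariant symmetric bilinear form on `𝔤` to its
restriction to `𝔥 × 𝔥`, has rank `s`. -/
theorem stmt14 {L : Type*} [LieRing L] [LieAlgebra ℝ L] [FiniteDimensional ℝ L]
    (r : ℕ) (g : Fin r → LieIdeal ℝ L)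
    (hsimple : ∀ i, LieAlgebra.IsSimple ℝ ↥(g i))
    (hneg : ∀ i, ∀ x ∈ g i, x ≠ 0 → killingForm ℝ L x x < 0)
    (hsup : (⨆ i, (LieSubmodule.toSubmodule (g i) : Submodule ℝ L)) = ⊤)
    (hindep : iSupIndep (fun i => (LieSubmodule.toSubmodule (g i) : Submodule ℝ L)))
    (h : LieSubalgebra ℝ L) (s : ℕ) (hs : s ≤ r)
    (hsub : h.toSubmodule ≤
      ⨆ i : {i : Fin r // (i : ℕ) < s}, (LieSubmodule.toSubmodule (g i.1) : Submodule ℝ L))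
    (hcap : ∀ i : Fin r, (i : ℕ) < s →
      h.toSubmodule ⊓ (LieSubmodule.toSubmodule (g i) : Submodule ℝ L) ≠ ⊥) :
    Module.finrank ℝ ↥(NForms L h.toSubmodule) = r - s ∧
    Module.finrank ℝ
        ↥(Submodule.map (restrictBilin L h.toSubmodule) (invSymmForms L)) = s := by
  have h1 := aux_dim r g hsimple hneg hsup hindep h.toSubmodule s hsub hcap
  have h0 := aux_dim r g hsimple hneg hsup hindep ⊥ 0 bot_le (fun i hi => absurd hi (by omega))
  rw [aux_card r s hs] at h1
  rw [aux_card r 0 (Nat.zero_le _)] at h0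
  have hbot : NForms L ⊥ = invSymmForms L := by
    ext B
    constructor
    · rintro ⟨a, b, _⟩
      exact ⟨a, b⟩
    · rintro ⟨a, b⟩
      refine ⟨a, b, fun x hx y _ => ?_⟩
      rw [(Submodule.mem_bot ℝ).1 hx]
      simp
  rw [hbot, Nat.sub_zero] at h0
  refine ⟨h1, ?_⟩
  have hrn := aux_rank L h.toSubmodule
  rw [h0] at hrn
  have hker : Module.finrank ℝ
      ↥(LinearMap.ker ((restrictBilin L h.toSubmodule).domRestrict (invSymmForms L))) = r - s := by
    have hmap : Submodule.map (invSymmForms L).subtype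
        (LinearMap.ker ((restrictBilin L h.toSubmodule).domRestrict (invSymmForms L))) =
        NForms L h.toSubmodule := by
      ext B
      constructor
      · rintro ⟨C, hC, rfl⟩
        refine ⟨C.2.1, C.2.2, fun x hx y hy => ?_⟩
        exact LinearMap.congr_fun (LinearMap.congr_fun (LinearMap.mem_ker.1 hC) ⟨x, hx⟩) ⟨y, hy⟩
      · rintro ⟨a, b, c⟩
        refine ⟨⟨B, a, b⟩, ?_, rfl⟩
        refine LinearMap.mem_ker.2 ?_
        ext x y
        exact c x x.2 y y.2
    rw [← h1, ← hmap]
    exact (LinearEquiv.finrank_eq (Submodule.equivMapOfInjective _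
      (Submodule.injective_subtype _) _))
  omega
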